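/- arXiv:1201.2722 — 3 statements merged into one kernel-verified Lean document; each statement's English description precedes it below -/
import Mathlib

section
/- The Whitten group Γ₂ has exactly 35 subgroups. -/
/-- The homomorphism `ω : S_μ → Aut(Z₂^{μ+1})`: a permutation `p` fixes the 0th
coordinate (indexed by `none`) and permutes the remaining `μ` coordinates
(indexed by `some i`). -/
def whittenHom (μ : ℕ) :
    Equiv.Perm (Fin μ) →* MulAut (Option (Fin μ) → Multiplicative (ZMod 2)) where
  toFun p := MulEquiv.arrowCongr (Equiv.optionCongr p) (MulEquiv.refl _)
  map_one' := by
    ext f x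
    cases x <;> rfl
  map_mul' := by
    intro p q
    ext f x
    cases x <;> rfl

/-- The Whitten group `Γ_μ = Z₂^{μ+1} ⋊_ω S_μ`. -/
abbrev WhittenGroup (μ : ℕ) : Type :=
  (Option (Fin μ) → Multiplicative (ZMod 2)) ⋊[whittenHom μ] Equiv.Perm (Fin μ)

namespace WhittenGroup

/-- Exchange the bits of weight 2 and 4. -/
def swapBits (a : ℕ) : ℕ :=
  bif a.testBit 1 ^^ a.testBit 2 then a ^^^ 6 else a

/-- Multiplication of `Γ₂` on four-bit codes. -/
def codeMul (a b : ℕ) : ℕ :=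
  a ^^^ (bif a.testBit 3 then swapBits b else b)

/-- Inversion of `Γ₂` on four-bit codes. -/
def codeInv (a : ℕ) : ℕ :=
  bif a.testBit 3 then swapBits a else a

/-- The element of `Γ₂` with a given four-bit code: the bits of weight 1, 2, 4 are the coordinates
of the `Z₂³` part, the bit of weight 8 tells whether the permutation is the transposition. -/
def decode (a : Fin 16) : WhittenGroup 2 where
  left i := Multiplicative.ofAdd <| match i with
    | none => if a.val.testBit 0 then 1 else 0
    | some 0 => if a.val.testBit 1 then 1 else 0
    | some 1 => if a.val.testBit 2 then 1 else 0
  right := if a.val.testBit 3 then Equiv.swap 0 1 else 1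

theorem decode_injective : Function.Injective decode := by
  have h : ∀ a b : Fin 16, (∀ i, (decode a).left i = (decode b).left i) →
      (decode a).right = (decode b).right → a = b := by decide +kernel
  intro a b hab
  exact h a b (fun i => by rw [hab]) (by rw [hab])

theorem decode_surjective : Function.Surjective decode := by
  have h : ∀ (x y z : Multiplicative (ZMod 2)) (p : Equiv.Perm (Fin 2)), ∃ a : Fin 16,
      (decode a).left none = x ∧ (decode a).left (some 0) = y ∧ (decode a).left (some 1) = z ∧
        (decode a).right = p := by
    decide +kernel
  intro g
  obtain ⟨a, h0, h1, h2, hp⟩ := h (g.left none) (g.left (some 0)) (g.left (some 1)) g.right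
  refine ⟨a, SemidirectProduct.ext (funext fun i => ?_) hp⟩
  match i with
  | none => exact h0
  | some 0 => exact h1
  | some 1 => exact h2

theorem codeMul_lt (a b : Fin 16) : codeMul a b < 16 := by
  revert a b
  decide +kernel

theorem codeInv_lt (a : Fin 16) : codeInv a < 16 := by
  revert a
  decide +kernel

theorem decode_mul (a b : Fin 16) : decode a * decode b = decode ⟨codeMul a b, codeMul_lt a b⟩ := by
  have h : ∀ a b : Fin 16,
      (∀ i, (decode a * decode b).left i = (decode ⟨codeMul a b, codeMul_lt a b⟩).left i) ∧
      (decode a * decode b).right = (decode ⟨codeMul a b, codeMul_lt a b⟩).right := by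
    decide +kernel
  exact SemidirectProduct.ext (funext (h a b).1) (h a b).2

theorem decode_zero : decode 0 = 1 := by
  have h : (∀ i, (decode 0).left i = (1 : WhittenGroup 2).left i) ∧
      (decode 0).right = (1 : WhittenGroup 2).right := by
    decide +kernel
  exact SemidirectProduct.ext (funext h.1) h.2

theorem decode_inv (a : Fin 16) : (decode a)⁻¹ = decode ⟨codeInv a, codeInv_lt a⟩ := by
  rw [inv_eq_iff_mul_eq_one, decode_mul, ← decode_zero]
  congr 1
  revert a
  decide +kernel

/-- Whether the set of codes `a < n` whose bit is set in `m` contains the identity and is closed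
under inversion and multiplication, as far as the results are again codes below `n`. -/
def isClosedMask (n m : ℕ) : Bool :=
  (n.ble 0 || m.testBit 0) && (List.range n).all fun a => !m.testBit a ||
    ((n.ble (codeInv a) || m.testBit (codeInv a)) && (List.range n).all fun b =>
      !m.testBit b || (n.ble (codeMul a b) || m.testBit (codeMul a b)))

theorem isClosedMask_iff (n m : ℕ) : isClosedMask n m ↔ (0 < n → m.testBit 0) ∧
    ∀ a < n, m.testBit a → (codeInv a < n → m.testBit (codeInv a)) ∧
      ∀ b < n, m.testBit b → codeMul a b < n → m.testBit (codeMul a b) := by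
  simp only [isClosedMask, Bool.and_eq_true, Bool.or_eq_true, List.all_eq_true, List.mem_range,
    Bool.not_eq_true', Nat.ble_eq, ← Bool.not_eq_true, ← imp_iff_not_or, ← not_lt]

theorem isClosedMask_sixteen_iff (m : ℕ) : isClosedMask 16 m ↔ m.testBit 0 ∧
    ∀ a : Fin 16, m.testBit a → m.testBit (codeInv a) ∧
      ∀ b : Fin 16, m.testBit b → m.testBit (codeMul a b) := by
  rw [isClosedMask_iff]
  refine ⟨fun h => ⟨h.1 (by norm_num), fun a ha => ?_⟩, fun h => ⟨fun _ => h.1, fun a hlt ha => ?_⟩⟩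
  · have h2 := h.2 a a.2 ha
    exact ⟨h2.1 (codeInv_lt a), fun b hb => h2.2 b b.2 hb (codeMul_lt a b)⟩
  · have h2 := h.2 ⟨a, hlt⟩ ha
    exact ⟨fun _ => h2.1, fun b hblt hb _ => h2.2 ⟨b, hblt⟩ hb⟩

theorem isClosedMask_mod {n m : ℕ} (h : isClosedMask 16 m) (hn : n ≤ 16) :
    isClosedMask n (m % 2 ^ n) := by
  rw [isClosedMask_iff] at h ⊢
  simp only [Nat.testBit_mod_two_pow, Bool.and_eq_true, decide_eq_true_eq]
  refine ⟨fun hpos => ⟨hpos, h.1 (by norm_num)⟩, fun a _ ⟨ha, ham⟩ => ?_⟩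
  have h2 := h.2 a (ha.trans_le hn) ham
  exact ⟨fun hi => ⟨hi, h2.1 (hi.trans_le hn)⟩, fun b _ ⟨hb, hbm⟩ hab =>
    ⟨hab, h2.2 b (hb.trans_le hn) hbm (hab.trans_le hn)⟩⟩

/-- The masks on `n` bits all of whose truncations are closed, found by deciding bit after bit. -/
def closedMasks : ℕ → List ℕ
  | 0 => [0]
  | n + 1 => (closedMasks n).filter (isClosedMask (n + 1)) ++
      ((closedMasks n).map (· + 2 ^ n)).filter (isClosedMask (n + 1))

theorem lt_two_pow_of_mem_closedMasks {n m : ℕ} (h : m ∈ closedMasks n) : m < 2 ^ n := by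
  induction n generalizing m with
  | zero => simp_all [closedMasks]
  | succ n ih =>
    simp only [closedMasks, List.mem_append, List.mem_filter, List.mem_map] at h
    rw [pow_succ]
    rcases h with ⟨h, -⟩ | ⟨⟨m', h, rfl⟩, -⟩ <;> have := ih h <;> omega

theorem isClosedMask_of_mem_closedMasks {n m : ℕ} (h : m ∈ closedMasks (n + 1)) :
    isClosedMask (n + 1) m := by
  simp only [closedMasks, List.mem_append, List.mem_filter] at h
  exact h.elim And.right And.right

theorem mod_mem_closedMasks {n m : ℕ} (h : isClosedMask 16 m) (hn : n ≤ 16) :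
    m % 2 ^ n ∈ closedMasks n := by
  induction n with
  | zero => simp [closedMasks, Nat.mod_one]
  | succ n ih =>
    have hmem := ih (by omega)
    have hclosed := isClosedMask_mod h hn
    rw [Nat.mod_pow_succ] at hclosed ⊢
    simp only [closedMasks, List.mem_append, List.mem_filter, List.mem_map]
    rcases Nat.mod_two_eq_zero_or_one (m / 2 ^ n) with hbit | hbit <;>
      simp only [hbit, mul_zero, mul_one, add_zero] at hclosed ⊢
    · exact Or.inl ⟨hmem, hclosed⟩
    · exact Or.inr ⟨⟨_, hmem, rfl⟩, hclosed⟩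

theorem mem_closedMasks_sixteen {m : ℕ} :
    m ∈ closedMasks 16 ↔ m < 2 ^ 16 ∧ isClosedMask 16 m := by
  refine ⟨fun h => ⟨lt_two_pow_of_mem_closedMasks h, isClosedMask_of_mem_closedMasks h⟩, ?_⟩
  rintro ⟨hlt, h⟩
  simpa only [Nat.mod_eq_of_lt hlt] using mod_mem_closedMasks h le_rfl

open Classical in
/-- The bit mask recording which codes decode to an element of `H`. -/
noncomputable def mask (H : Subgroup (WhittenGroup 2)) : ℕ :=
  Nat.ofBits fun a : Fin 16 => decide (decode a ∈ H)

theorem testBit_mask (H : Subgroup (WhittenGroup 2)) (a : Fin 16) :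
    (mask H).testBit a ↔ decode a ∈ H := by
  simp [mask, Nat.testBit_ofBits_lt]

theorem mask_injective : Function.Injective mask := by
  intro H K h
  ext g
  obtain ⟨a, rfl⟩ := decode_surjective g
  rw [← testBit_mask, ← testBit_mask, h]

theorem mask_lt (H : Subgroup (WhittenGroup 2)) : mask H < 2 ^ 16 :=
  Nat.ofBits_lt_two_pow _

theorem isClosedMask_mask (H : Subgroup (WhittenGroup 2)) : isClosedMask 16 (mask H) := by
  refine (isClosedMask_sixteen_iff _).2 ⟨?_, fun a ha => ⟨?_, fun b hb => ?_⟩⟩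
  · exact (testBit_mask H 0).2 (decode_zero ▸ H.one_mem)
  · exact (testBit_mask H ⟨_, codeInv_lt a⟩).2
      (decode_inv a ▸ H.inv_mem ((testBit_mask H a).1 ha))
  · exact (testBit_mask H ⟨_, codeMul_lt a b⟩).2
      (decode_mul a b ▸ H.mul_mem ((testBit_mask H a).1 ha) ((testBit_mask H b).1 hb))

/-- The subgroup of `Γ₂` cut out by a bit mask. -/
def ofMask (m : ℕ) (hm : isClosedMask 16 m) : Subgroup (WhittenGroup 2) where
  carrier := decode '' {a | m.testBit a}
  one_mem' := ⟨0, ((isClosedMask_sixteen_iff m).1 hm).1, decode_zero⟩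
  mul_mem' := by
    rintro _ _ ⟨a, ha, rfl⟩ ⟨b, hb, rfl⟩
    exact ⟨_, (((isClosedMask_sixteen_iff m).1 hm).2 a ha).2 b hb, (decode_mul a b).symm⟩
  inv_mem' := by
    rintro _ ⟨a, ha, rfl⟩
    exact ⟨_, (((isClosedMask_sixteen_iff m).1 hm).2 a ha).1, (decode_inv a).symm⟩

theorem mask_ofMask {m : ℕ} (hm : isClosedMask 16 m) (hlt : m < 2 ^ 16) :
    mask (ofMask m hm) = m := by
  refine Nat.eq_of_testBit_eq fun i => ?_
  by_cases hi : i < 16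
  · have h : (mask (ofMask m hm)).testBit i ↔ m.testBit i :=
      (testBit_mask _ ⟨i, hi⟩).trans (decode_injective.mem_set_image (s := {a | m.testBit a}))
    exact Bool.eq_iff_iff.2 h
  · have hle : 2 ^ 16 ≤ 2 ^ i := Nat.pow_le_pow_right two_pos (not_lt.1 hi)
    rw [Nat.testBit_lt_two_pow (hlt.trans_le hle),
      Nat.testBit_lt_two_pow ((mask_lt _).trans_le hle)]

theorem range_mask : Set.range mask = ((closedMasks 16).toFinset : Set ℕ) := by
  ext m
  simp only [Set.mem_range, List.coe_toFinset, Set.mem_ofPred_eq, mem_closedMasks_sixteen]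
  constructor
  · rintro ⟨H, rfl⟩
    exact ⟨mask_lt H, isClosedMask_mask H⟩
  · rintro ⟨hlt, hm⟩
    exact ⟨ofMask m hm, mask_ofMask hm hlt⟩

theorem card_closedMasks : (closedMasks 16).toFinset.card = 35 := by
  decide +kernel

end WhittenGroup

/-- The Whitten group Γ₂ has exactly 35 subgroups. -/
theorem whittenGroup_two_num_subgroups :
    Nat.card (Subgroup (WhittenGroup 2)) = 35 := by
  rw [← Nat.card_range_of_injective WhittenGroup.mask_injective, WhittenGroup.range_mask,
    Nat.card_coe_set_eq, Set.ncard_coe_finset, WhittenGroup.card_closedMasks]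
end

section
/- The subgroups of order 4 of the Whitten group Γ₂ fall into exactly 11 conjugacy classes under conjugation by elements of Γ₂. -/
/-- Two subgroups are conjugate if one is carried to the other by conjugation. -/
def subgroupConj {G : Type*} [Group G] (H K : Subgroup G) : Prop :=
  ∃ γ : G, Subgroup.map (MulAut.conj γ).toMonoidHom H = K

/-- The element of `Γ₂` with the given signs, transposing the last two coordinates iff `s`. -/
def whittenElt (e₀ e₁ e₂ s : Bool) : WhittenGroup 2 where
  left
    | none => .ofAdd (cond e₀ 1 0)
    | some 0 => .ofAdd (cond e₁ 1 0)
    | some 1 => .ofAdd (cond e₂ 1 0)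
  right := cond s (Equiv.swap 0 1) 1

theorem exists_whittenElt_eq (g : WhittenGroup 2) :
    ∃ e₀ e₁ e₂ s, whittenElt e₀ e₁ e₂ s = g := by
  have cond_surj : ∀ x : Multiplicative (ZMod 2), ∃ e, .ofAdd (cond e 1 0) = x := by decide
  have swap_surj : ∀ p : Equiv.Perm (Fin 2), ∃ s, cond s (Equiv.swap 0 1) 1 = p := by decide
  obtain ⟨e₀, h₀⟩ := cond_surj (g.left none)
  obtain ⟨e₁, h₁⟩ := cond_surj (g.left (some 0))
  obtain ⟨e₂, h₂⟩ := cond_surj (g.left (some 1))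
  obtain ⟨s, hs⟩ := swap_surj g.right
  refine ⟨e₀, e₁, e₂, s, SemidirectProduct.ext (funext fun x => ?_) hs⟩
  match x with
  | none => exact h₀
  | some 0 => exact h₁
  | some 1 => exact h₂

instance : DecidableEq (WhittenGroup 2) := fun _ _ =>
  decidable_of_iff' _ SemidirectProduct.ext_iff

theorem forall_whittenElt {P : WhittenGroup 2 → Prop} :
    (∀ g, P g) ↔ ∀ e₀ e₁ e₂ s, P (whittenElt e₀ e₁ e₂ s) :=
  ⟨fun h _ _ _ _ => h _, fun h g => by
    obtain ⟨e₀, e₁, e₂, s, rfl⟩ := exists_whittenElt_eq g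
    exact h ..⟩

theorem exists_whittenElt {P : WhittenGroup 2 → Prop} :
    (∃ g, P g) ↔ ∃ e₀ e₁ e₂ s, P (whittenElt e₀ e₁ e₂ s) :=
  ⟨fun ⟨g, h⟩ => by
    obtain ⟨e₀, e₁, e₂, s, rfl⟩ := exists_whittenElt_eq g
    exact ⟨_, _, _, _, h⟩, fun ⟨_, _, _, _, h⟩ => ⟨_, h⟩⟩

instance (P : WhittenGroup 2 → Prop) [DecidablePred P] : Decidable (∀ g, P g) :=
  decidable_of_iff' _ forall_whittenElt

instance (P : WhittenGroup 2 → Prop) [DecidablePred P] : Decidable (∃ g, P g) :=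
  decidable_of_iff' _ exists_whittenElt

section FourPair

variable {G : Type*} [Group G]

/-- The elements of a subgroup of order 4 containing `a` and `b`, when `IsFourPair a b`. -/
def fourElts (a b : G) : List G := [1, a, b, a * b]

theorem mem_fourElts {a b x : G} : x ∈ fourElts a b ↔ x = 1 ∨ x = a ∨ x = b ∨ x = a * b := by
  simp [fourElts]

/-- `1, a, b, a * b` are the distinct elements of a subgroup. -/
structure IsFourPair (a b : G) : Prop where
  nodup : (fourElts a b).Nodup
  mul_mem : ∀ x ∈ fourElts a b, ∀ y ∈ fourElts a b, x * y ∈ fourElts a b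
  inv_mem : ∀ x ∈ fourElts a b, x⁻¹ ∈ fourElts a b

instance [DecidableEq G] (a b : G) : Decidable (IsFourPair a b) :=
  decidable_of_iff ((fourElts a b).Nodup ∧
      (∀ x ∈ fourElts a b, ∀ y ∈ fourElts a b, x * y ∈ fourElts a b) ∧
      ∀ x ∈ fourElts a b, x⁻¹ ∈ fourElts a b)
    ⟨fun h => ⟨h.1, h.2.1, h.2.2⟩, fun h => ⟨h.1, h.2, h.3⟩⟩

theorem card_coe_fourElts {a b : G} (h : (fourElts a b).Nodup) :
    Nat.card {x // x ∈ fourElts a b} = 4 := by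
  classical
  rw [Nat.subtype_card (fourElts a b).toFinset (by simp), List.toFinset_card_of_nodup h]
  rfl

/-- The subgroup of order 4 containing `a` and `b`. -/
def IsFourPair.subgroup {a b : G} (h : IsFourPair a b) : Subgroup G where
  carrier := {x | x ∈ fourElts a b}
  mul_mem' := fun hx hy => h.mul_mem _ hx _ hy
  one_mem' := mem_fourElts.2 (.inl rfl)
  inv_mem' := fun {x} hx => h.inv_mem x hx

theorem IsFourPair.card_subgroup {a b : G} (h : IsFourPair a b) : Nat.card h.subgroup = 4 :=
  card_coe_fourElts h.nodup

theorem exists_isFourPair (H : Subgroup G) (hH : Nat.card H = 4) :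
    ∃ a b, IsFourPair a b ∧ ∀ x, x ∈ H ↔ x ∈ fourElts a b := by
  have : Finite H := Nat.finite_of_card_ne_zero (by omega)
  obtain ⟨a, ha, ha₁⟩ : ∃ a ∈ H, a ≠ 1 := by
    refine H.ne_bot_iff_exists_ne_one.1 ?_ |>.elim fun a ha => ⟨a, a.2, by simpa using ha⟩
    rintro rfl
    simp at hH
  obtain ⟨b, hb, hb'⟩ : ∃ b ∈ H, b ∉ ({1, a, a⁻¹} : Set G) := by
    by_contra! h
    have hle : (H : Set G).ncard ≤ ({1, a, a⁻¹} : Set G).ncard := Set.ncard_le_ncard h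
    have hle' : ({1, a, a⁻¹} : Set G).ncard ≤ 3 := by
      grw [Set.ncard_insert_le, Set.ncard_insert_le, Set.ncard_singleton]
    have hcard : (H : Set G).ncard = 4 := hH
    omega
  simp only [Set.mem_insert_iff, Set.mem_singleton_iff, not_or] at hb'
  obtain ⟨hb₁, hba, hbi⟩ := hb'
  have hnd : (fourElts a b).Nodup := by
    have : a * b ≠ 1 := fun h => hbi (eq_inv_of_mul_eq_one_right h)
    simp [fourElts, ha₁.symm, Ne.symm hb₁, Ne.symm hba, this.symm, ha₁, hb₁]
  have hle : {x | x ∈ fourElts a b} ⊆ (H : Set G) := by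
    intro x hx
    rcases mem_fourElts.1 hx with rfl | rfl | rfl | rfl
    exacts [H.one_mem, ha, hb, H.mul_mem ha hb]
  have heq : {x | x ∈ fourElts a b} = (H : Set G) :=
    Set.eq_of_subset_of_ncard_le hle
      ((hH.trans (card_coe_fourElts hnd).symm).le) ‹Finite H›
  have hmem : ∀ x, x ∈ H ↔ x ∈ fourElts a b := fun x => (Set.ext_iff.1 heq x).symm
  refine ⟨a, b, ⟨hnd, fun x hx y hy => ?_, fun x hx => ?_⟩, hmem⟩
  · exact (hmem _).1 (H.mul_mem ((hmem x).2 hx) ((hmem y).2 hy))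
  · exact (hmem _).1 (H.inv_mem ((hmem x).2 hx))

/-- The elements having a conjugate in `H`. -/
def conjInvariant (H : Subgroup G) : Set G := {g | ∃ γ : G, γ * g * γ⁻¹ ∈ H}

theorem subgroupConj.conjInvariant_eq {H K : Subgroup G} (h : subgroupConj H K) :
    conjInvariant H = conjInvariant K := by
  obtain ⟨δ, rfl⟩ := h
  ext g
  constructor
  · rintro ⟨γ, hγ⟩
    exact ⟨δ * γ, γ * g * γ⁻¹, hγ, by simp [mul_assoc]⟩
  · rintro ⟨γ, x, hx, hxg⟩
    refine ⟨δ⁻¹ * γ, ?_⟩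
    convert hx
    have : x = δ⁻¹ * (γ * g * γ⁻¹) * δ := by simp [← hxg, mul_assoc]
    simp [this, mul_assoc]

end FourPair

/-- Generators of representatives of the conjugacy classes of subgroups of order 4: the first seven
subgroups contain the commutator `(1, -1, -1)`, the other four do not. -/
def fourPair : Fin 11 → WhittenGroup 2 × WhittenGroup 2 :=
  let z := whittenElt false true true false
  let c := whittenElt true false false false
  let s := whittenElt false true false false
  let t := whittenElt false false false true
  ![(z, c), (z, s), (z, t), (z, s * t), (z, c * s), (z, c * t), (z, c * (s * t)),
    (c, s), (c, t), (c * z, s), (c * z, t)]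

theorem isFourPair_fourPair : ∀ i, IsFourPair (fourPair i).1 (fourPair i).2 := by
  decide +kernel

theorem fourPair_separated : ∀ i j,
    (∀ g : WhittenGroup 2,
      (∃ γ : WhittenGroup 2, γ * g * γ⁻¹ ∈ fourElts (fourPair i).1 (fourPair i).2) ↔
        ∃ γ : WhittenGroup 2, γ * g * γ⁻¹ ∈ fourElts (fourPair j).1 (fourPair j).2) →
    i = j := by
  decide +kernel

theorem exists_conj_mem_fourPair : ∀ a b : WhittenGroup 2, IsFourPair a b →
    ∃ i, ∃ γ : WhittenGroup 2, ∀ x ∈ fourElts a b,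
      γ * x * γ⁻¹ ∈ fourElts (fourPair i).1 (fourPair i).2 := by
  decide +kernel

/-- The representative subgroups of order 4. -/
def fourSubgroup (i : Fin 11) : {H : Subgroup (WhittenGroup 2) // Nat.card H = 4} :=
  ⟨(isFourPair_fourPair i).subgroup, (isFourPair_fourPair i).card_subgroup⟩

theorem exists_subgroupConj_fourSubgroup (H : Subgroup (WhittenGroup 2)) (hH : Nat.card H = 4) :
    ∃ i, subgroupConj H (fourSubgroup i).1 := by
  obtain ⟨a, b, hab, hmem⟩ := exists_isFourPair H hH
  obtain ⟨i, γ, hγ⟩ := exists_conj_mem_fourPair a b hab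
  have : Finite (fourSubgroup i).1 :=
    Nat.finite_of_card_ne_zero (by rw [(fourSubgroup i).2]; omega)
  refine ⟨i, γ, Subgroup.eq_of_le_of_card_ge ?_ ?_⟩
  · rintro _ ⟨x, hx, rfl⟩
    exact hγ x ((hmem x).1 hx)
  · rw [Subgroup.card_map_of_injective (MulAut.conj γ).injective, hH, (fourSubgroup i).2]

/-- The subgroups of order 4 of the Whitten group Γ₂ fall into
exactly 11 conjugacy classes under conjugation by elements of Γ₂. -/
theorem whittenGroup_two_subgroups_order_4_up_to_conj :
    Nat.card (Quot fun H K : {H : Subgroup (WhittenGroup 2) // Nat.card H = 4} =>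
      subgroupConj H.1 K.1) = 11 := by
  let r := fun H K : {H : Subgroup (WhittenGroup 2) // Nat.card H = 4} => subgroupConj H.1 K.1
  have hbij : Function.Bijective fun i => Quot.mk r (fourSubgroup i) := by
    refine ⟨fun i j hij => fourPair_separated i j fun g => ?_, ?_⟩
    · exact Set.ext_iff.1 (congrArg (Quot.lift (r := r) (fun H => conjInvariant H.1)
        fun _ _ h => subgroupConj.conjInvariant_eq h) hij) g
    · rintro ⟨H, hH⟩
      obtain ⟨i, hi⟩ := exists_subgroupConj_fourSubgroup H hH
      exact ⟨i, (Quot.sound (r := r) (a := ⟨H, hH⟩) hi).symm⟩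
  rw [← Nat.card_eq_of_bijective _ hbij, Nat.card_fin]
end

section
/- The Whitten group Γ₃ (a group of order 96) has exactly 420 subgroups, and these subgroups fall into exactly 131 conjugacy classes. -/
/-! Subsets of `Γ_3` are encoded as natural numbers below `2 ^ 96`, called masks: bit `code x` of
the mask tells whether `x` belongs to the subset. -/

namespace Whitten

/-- Move the bits of `m`: a triple `(s, l, r)` of `t` fills the positions in `s` with the bits of
`m` shifted left by `l` and right by `r`. -/
def moveBits (t : List (ℕ × ℕ × ℕ)) (m : ℕ) : ℕ :=
  t.foldr (fun s acc => (((m >>> s.2.2) <<< s.2.1) &&& s.1) ||| acc) 0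

/-- The table of left multiplication by `genA`. -/
def mulA : List (ℕ × ℕ × ℕ) :=
  [(26409387504754779197847983445, 0, 1), (52818775009509558395695966890, 1, 0)]

/-- The table of left multiplication by `genB`. -/
def mulB : List (ℕ × ℕ × ℕ) :=
  [(15845632502852867518708790067, 0, 2), (63382530011411470074835160268, 2, 0)]

/-- The table of left multiplication by `genC`. -/
def mulC : List (ℕ × ℕ × ℕ) :=
  [(4660480147897902211384938255, 0, 4), (74567682366366435382159012080, 4, 0)]

/-- The table of left multiplication by `genD`. -/
def mulD : List (ℕ × ℕ × ℕ) :=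
  [(308280787993246449780326655, 0, 8), (78919881726271091143763623680, 8, 0)]

/-- The table of left multiplication by `genR`. -/
def mulR : List (ℕ × ℕ × ℕ) :=
  [(1148417904979480560, 0, 36), (4222124650659855, 0, 32), (17293822569102766080, 0, 24),
   (4932492606743525291505745920, 12, 0), (18134163995380607689359360, 16, 0),
   (74277535725078969095615938560, 24, 0)]

/-- The table of left multiplication by `genS`. -/
def mulS : List (ℕ × ℕ × ℕ) :=
  [(15728640, 0, 68), (4027514880, 0, 64), (251658240, 0, 60), (240, 0, 52), (61455, 0, 48),
   (3840, 0, 44), (1030792151040, 0, 36), (263947215175680, 0, 32), (16492674416640, 0, 28),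
   (4427218577690292387840, 28, 0), (1133644657049820494561280, 32, 0),
   (70835497243044678205440, 36, 0),
   (67553994410557440, 44, 0), (17298044693753364480, 48, 0), (1080863910568919040, 52, 0),
   (290142196707511001929482240, 60, 0), (74294536244417035931568046080, 64, 0),
   (4642275147320176030871715840, 68, 0)]

/-- The table of conjugation by `genC`. -/
def conjC : List (ℕ × ℕ × ℕ) :=
  [(4222189075169280, 0, 12), (308276084001730439566786560, 0, 8), (67555025202708480, 0, 4),
   (1208907372870555465220095, 0, 0), (1080880403243335680, 4, 0),
   (78918677504442992529097359360, 8, 0),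
   (17294086451893370880, 12, 0)]

/-- The table of conjugation by `genD`. -/
def conjD : List (ℕ × ℕ × ℕ) :=
  [(4222124651642880, 0, 12), (71112265974701846691840, 0, 4),
   (79226953588444722964369309695, 0, 0),
   (1137796255595229547069440, 4, 0), (17293822573129236480, 12, 0)]

/-- The table of conjugation by `genR`. -/
def conjR : List (ℕ × ℕ × ℕ) :=
  [(75263864238639950069760, 0, 20), (276705383230293934080, 0, 16),
   (1133385249711283953991680, 0, 8),
   (17523733958640, 0, 4), (64425492495, 0, 0), (263886817259520, 8, 0),
   (4932417344027687032801198080, 28, 0), (18133887294219437620592640, 32, 0),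
   (74276402357122816493947453440, 40, 0)]

/-- The table of conjugation by `genS`. -/
def conjS : List (ℕ × ℕ × ℕ) :=
  [(4427218577690308116480, 0, 20), (1133644657049824522076160, 0, 16),
   (70835497243044929863680, 0, 12),
   (67553994410557680, 0, 4), (17298044693753425935, 0, 0), (1080863910568922880, 4, 0),
   (290142196707512032721633280, 12, 0), (74294536244417299878783221760, 16, 0),
   (4642275147320192523546132480, 20, 0)]

/-- The mask of `elt i * M`, where `M` has mask `m`. -/
def mulMask (i m : ℕ) : ℕ :=
  (moveBits mulA)^[i % 2] ((moveBits mulB)^[i / 2 % 2] ((moveBits mulC)^[i / 4 % 2]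
    ((moveBits mulD)^[i / 8 % 2] ((moveBits mulR)^[i / 16 % 3] ((moveBits mulS)^[i / 48] m)))))

/-- The mask of the conjugate of `M` by `elt i`, where `M` has mask `m`. -/
def conjMask (i m : ℕ) : ℕ :=
  (moveBits conjC)^[i / 4 % 2] ((moveBits conjD)^[i / 8 % 2] ((moveBits conjR)^[i / 16 % 3]
    ((moveBits conjS)^[i / 48] m)))

/-- Whether the set with mask `m` is stable under left multiplication by each of its elements. -/
def isSubgroupMask (m : ℕ) : Bool :=
  (List.range 96).all fun i => !m.testBit i || mulMask i m == m

/-- The mask of `M ∪ g * M ∪ g ^ 2 * M`, where `M` has mask `m` and `g = elt i`. -/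
def adjoin (m i : ℕ) : ℕ :=
  m ||| mulMask i m ||| mulMask i (mulMask i m)

/-- Given the masks `L` of the subgroups all of whose elements have code below `lo`, the same for
`hi`. A new subgroup is obtained by adjoining its element of greatest code. -/
def extend (lo hi : ℕ) (L : List ℕ) : List ℕ :=
  L ++ L.flatMap fun m => ((List.range' lo (hi - lo)).filter fun i =>
    decide (mulMask i m < 2 ^ (i + 1)) && decide (adjoin m i < 2 ^ (i + 1)) &&
      isSubgroupMask (adjoin m i)).map (adjoin m)

/-- The masks of all subgroups of `Γ_3`. -/
def subgroupMasks : List ℕ :=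
  extend 48 96 (extend 16 48 (extend 8 16 (extend 4 8 (extend 2 4 (extend 1 2 [1])))))

instance : Fintype (WhittenGroup 3) :=
  Fintype.ofEquiv _ SemidirectProduct.equivProd.symm

/-- The element of `Γ_3` with trivial permutation, supported on the coordinates listed in `s`. -/
def transl (s : List (Option (Fin 3))) : WhittenGroup 3 :=
  ⟨fun i => if i ∈ s then Multiplicative.ofAdd 1 else 1, 1⟩

def genA : WhittenGroup 3 := transl [none]
def genB : WhittenGroup 3 := transl [some 0, some 1, some 2]
def genC : WhittenGroup 3 := transl [some 0, some 2]
def genD : WhittenGroup 3 := transl [some 1, some 2]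
def genR : WhittenGroup 3 := ⟨1, finRotate 3⟩
def genS : WhittenGroup 3 := ⟨1, Equiv.swap 0 1⟩

/-- The element with code `i`. -/
def elt (i : ℕ) : WhittenGroup 3 :=
  genA ^ (i % 2) * (genB ^ (i / 2 % 2) * (genC ^ (i / 4 % 2) *
    (genD ^ (i / 8 % 2) * (genR ^ (i / 16 % 3) * genS ^ (i / 48)))))

/-- The position of `x` in the masks. -/
def code (x : WhittenGroup 3) : ℕ :=
  let v := fun i => (x.left i).toAdd
  let z := v (some 0) + v (some 1) + v (some 2)
  (v none).val + 2 * z.val + 4 * (v (some 0) + z).val + 8 * (v (some 1) + z).val +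
    16 * (x.right 2 + 1).val + 48 * if x.right 0 = x.right 2 + 1 then 0 else 1

theorem elt_code (x : WhittenGroup 3) : elt (code x) = x := by
  rw [SemidirectProduct.ext_iff]
  revert x; decide +kernel

theorem code_lt (x : WhittenGroup 3) : code x < 96 := by
  revert x; decide +kernel

theorem code_elt : ∀ i < 96, code (elt i) = i := by
  decide +kernel

/-- `f` transforms the mask of a subset of `Γ_3` into the mask of its image under `φ`. -/
structure Moves (f : ℕ → ℕ) (φ : WhittenGroup 3 → WhittenGroup 3) : Prop where
  lt : ∀ m < 2 ^ 96, f m < 2 ^ 96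
  testBit : ∀ m x, (f m).testBit (code (φ x)) = m.testBit (code x)

theorem Moves.id : Moves id id := ⟨fun _ h => h, fun _ _ => rfl⟩

theorem Moves.comp {f g φ ψ} (hf : Moves f φ) (hg : Moves g ψ) : Moves (f ∘ g) (φ ∘ ψ) :=
  ⟨fun m h => hf.lt _ (hg.lt m h), fun m x => (hf.testBit _ _).trans (hg.testBit m x)⟩

theorem Moves.iterate {f φ} (hf : Moves f φ) : ∀ n, Moves f^[n] φ^[n]
  | 0 => Moves.id
  | n + 1 => (hf.iterate n).comp hf

theorem testBit_moveBits (t : List (ℕ × ℕ × ℕ)) (m i : ℕ) :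
    (moveBits t m).testBit i = t.any fun s =>
      s.1.testBit i && (decide (s.2.1 ≤ i) && m.testBit (s.2.2 + (i - s.2.1))) := by
  induction t with
  | nil => simp [moveBits]
  | cons s t ih =>
    simp only [moveBits] at ih
    simp [moveBits, ih, Bool.and_comm]

/-- The table `t` moves bit `j` to position `i`. -/
def tableMoves (t : List (ℕ × ℕ × ℕ)) (j i : ℕ) : Bool :=
  t.any (fun s => s.1.testBit i) &&
    t.all fun s => !s.1.testBit i || decide (s.2.1 ≤ i ∧ s.2.2 + (i - s.2.1) = j)

theorem testBit_moveBits_of_tableMoves {t : List (ℕ × ℕ × ℕ)} {j i : ℕ}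
    (h : tableMoves t j i = true) (m : ℕ) : (moveBits t m).testBit i = m.testBit j := by
  simp only [tableMoves, Bool.and_eq_true, List.any_eq_true, List.all_eq_true, Bool.or_eq_true,
    Bool.not_eq_true', decide_eq_true_eq] at h
  obtain ⟨⟨s, hs, hsi⟩, h⟩ := h
  rw [testBit_moveBits, Bool.eq_iff_iff, List.any_eq_true]
  constructor
  · rintro ⟨u, hu, hm⟩
    grind
  · intro hm
    exact ⟨s, hs, by grind⟩

theorem Moves.of_table {t : List (ℕ × ℕ × ℕ)} {φ : WhittenGroup 3 → WhittenGroup 3}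
    (ht : (t.all fun s => decide (s.1 < 2 ^ 96)) = true)
    (h : ∀ x, tableMoves t (code x) (code (φ x)) = true) : Moves (moveBits t) φ where
  lt m _ := by
    refine Nat.lt_pow_two_of_testBit _ fun i hi => ?_
    rw [testBit_moveBits, List.any_eq_false]
    intro s hs
    have hs' : s.1 < 2 ^ i :=
      (of_decide_eq_true (List.all_eq_true.1 ht s hs)).trans_le (Nat.pow_le_pow_right (by simp) hi)
    simp [Nat.testBit_eq_false_of_lt hs']
  testBit m x := testBit_moveBits_of_tableMoves (h x) m

theorem moves_mulMask (g : WhittenGroup 3) : Moves (mulMask (code g)) (g * ·) := by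
  have hA : Moves (moveBits mulA) (genA * ·) := .of_table (by decide) (by decide +kernel)
  have hB : Moves (moveBits mulB) (genB * ·) := .of_table (by decide) (by decide +kernel)
  have hC : Moves (moveBits mulC) (genC * ·) := .of_table (by decide) (by decide +kernel)
  have hD : Moves (moveBits mulD) (genD * ·) := .of_table (by decide) (by decide +kernel)
  have hR : Moves (moveBits mulR) (genR * ·) := .of_table (by decide) (by decide +kernel)
  have hS : Moves (moveBits mulS) (genS * ·) := .of_table (by decide) (by decide +kernel)
  generalize hi : code g = i
  obtain rfl : elt i = g := hi ▸ elt_code g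
  convert (hA.iterate (i % 2)).comp <| (hB.iterate (i / 2 % 2)).comp <|
    (hC.iterate (i / 4 % 2)).comp <| (hD.iterate (i / 8 % 2)).comp <|
    (hR.iterate (i / 16 % 3)).comp (hS.iterate (i / 48)) using 1
  · rfl
  simp only [mul_left_iterate]
  ext1 x
  simp [elt, mul_assoc]

theorem moves_conjMask (g : WhittenGroup 3) : Moves (conjMask (code g)) (MulAut.conj g) := by
  have hC : Moves (moveBits conjC) (MulAut.conj genC) := .of_table (by decide) (by decide +kernel)
  have hD : Moves (moveBits conjD) (MulAut.conj genD) := .of_table (by decide) (by decide +kernel)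
  have hR : Moves (moveBits conjR) (MulAut.conj genR) := .of_table (by decide) (by decide +kernel)
  have hS : Moves (moveBits conjS) (MulAut.conj genS) := .of_table (by decide) (by decide +kernel)
  have hA : MulAut.conj genA = 1 := by
    ext1 x; rw [SemidirectProduct.ext_iff]; revert x; decide +kernel
  have hB : MulAut.conj genB = 1 := by
    ext1 x; rw [SemidirectProduct.ext_iff]; revert x; decide +kernel
  generalize hi : code g = i
  obtain rfl : elt i = g := hi ▸ elt_code g
  convert (hC.iterate (i / 4 % 2)).comp <| (hD.iterate (i / 8 % 2)).comp <|
    (hR.iterate (i / 16 % 3)).comp (hS.iterate (i / 48)) using 1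
  · rfl
  have hpow (h : WhittenGroup 3) (n : ℕ) : (MulAut.conj h)^[n] = MulAut.conj (h ^ n) := by
    rw [map_pow]
    exact (hom_coe_pow _ rfl (fun _ _ => rfl) _ _).symm
  ext1 x
  simp only [hpow, elt, map_mul, map_pow, hA, hB, one_pow, one_mul, MulAut.mul_apply,
    Function.comp_apply]

theorem testBit_mulMask (g x : WhittenGroup 3) (m : ℕ) :
    (mulMask (code g) m).testBit (code x) = m.testBit (code (g⁻¹ * x)) := by
  simpa using (moves_mulMask g).testBit m (g⁻¹ * x)

theorem eq_of_testBit_code {m n : ℕ} (hm : m < 2 ^ 96) (hn : n < 2 ^ 96)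
    (h : ∀ x, m.testBit (code x) = n.testBit (code x)) : m = n := by
  refine Nat.eq_of_testBit_eq fun i => ?_
  rcases lt_or_ge i 96 with hi | hi
  · simpa [code_elt i hi] using h (elt i)
  · have hle : 2 ^ 96 ≤ 2 ^ i := Nat.pow_le_pow_right (by simp) hi
    rw [Nat.testBit_eq_false_of_lt (hm.trans_le hle), Nat.testBit_eq_false_of_lt (hn.trans_le hle)]

open Classical in
/-- The number whose binary digits list the members of `S`. -/
noncomputable def mask (S : Subgroup (WhittenGroup 3)) : ℕ :=
  Nat.ofBits fun i : Fin 96 => decide (elt i ∈ S)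

theorem mask_lt (S : Subgroup (WhittenGroup 3)) : mask S < 2 ^ 96 :=
  Nat.ofBits_lt_two_pow _

theorem testBit_mask {S : Subgroup (WhittenGroup 3)} {x : WhittenGroup 3} :
    (mask S).testBit (code x) = true ↔ x ∈ S := by
  rw [mask, Nat.testBit_ofBits_lt _ _ (code_lt x)]
  simp [elt_code]

theorem mask_ne_zero (S : Subgroup (WhittenGroup 3)) : mask S ≠ 0 := fun h => by
  simpa [h] using testBit_mask.2 S.one_mem

theorem mask_injective : Function.Injective mask := fun S T h => by
  ext x
  rw [← testBit_mask, h, testBit_mask]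

theorem mask_eq_iff {S : Subgroup (WhittenGroup 3)} {m : ℕ} (hm : m < 2 ^ 96) :
    mask S = m ↔ ∀ x, m.testBit (code x) = true ↔ x ∈ S := by
  refine ⟨fun h x => h ▸ testBit_mask, fun h => eq_of_testBit_code (mask_lt S) hm fun x => ?_⟩
  rw [Bool.eq_iff_iff, h, testBit_mask]

theorem mask_lt_two_pow_iff {S : Subgroup (WhittenGroup 3)} {n : ℕ} :
    mask S < 2 ^ n ↔ ∀ x ∈ S, code x < n := by
  refine ⟨fun h x hx => ?_, fun h => Nat.lt_pow_two_of_testBit _ fun i hi => ?_⟩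
  · by_contra! hn
    have := Nat.testBit_eq_false_of_lt (h.trans_le (Nat.pow_le_pow_right (by simp) hn))
    simp [testBit_mask.2 hx] at this
  · rcases lt_or_ge i 96 with h96 | h96
    · by_contra hb
      rw [Bool.not_eq_false, ← code_elt i h96, testBit_mask] at hb
      exact absurd (h _ hb) (by rw [code_elt i h96]; omega)
    · exact Nat.testBit_eq_false_of_lt
        ((mask_lt S).trans_le (Nat.pow_le_pow_right (by simp) h96))

theorem isSubgroupMask_mask (S : Subgroup (WhittenGroup 3)) : isSubgroupMask (mask S) = true := by
  rw [isSubgroupMask, List.all_eq_true]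
  intro i hi
  rw [List.mem_range] at hi
  rw [← code_elt i hi, Bool.or_eq_true, Bool.not_eq_true', ← Bool.not_eq_true, testBit_mask,
    beq_iff_eq, eq_comm]
  refine or_iff_not_imp_left.2 fun hS => (mask_eq_iff ((moves_mulMask _).lt _ (mask_lt S))).2 ?_
  intro x
  rw [testBit_mulMask, testBit_mask]
  exact S.mul_mem_cancel_left (S.inv_mem (not_not.1 hS))

theorem exists_mask_eq {m : ℕ} (hm : isSubgroupMask m = true) (h0 : m ≠ 0) (hlt : m < 2 ^ 96) :
    ∃ S, mask S = m := by
  have key (g x) (hg : m.testBit (code g) = true) :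
      m.testBit (code (g⁻¹ * x)) = m.testBit (code x) := by
    have h := List.all_eq_true.1 hm (code g) (List.mem_range.2 (code_lt g))
    rw [hg, Bool.not_true, Bool.false_or, beq_iff_eq] at h
    rw [← testBit_mulMask, h]
  obtain ⟨y, hy⟩ : ∃ y, m.testBit (code y) = true := by
    by_contra! h
    exact h0 (eq_of_testBit_code hlt (by simp) (by simpa using h))
  have one : m.testBit (code 1) = true := by rw [← hy, ← key y y hy, inv_mul_cancel]
  refine ⟨{ carrier := {x | m.testBit (code x) = true}
            one_mem' := one
            mul_mem' := fun {a b} ha hb => ?_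
            inv_mem' := fun {a} ha => ?_ }, (mask_eq_iff hlt).2 fun x => Iff.rfl⟩
  · change m.testBit (code (a * b)) = true
    rw [← key a _ ha, inv_mul_cancel_left]
    exact hb
  · change m.testBit (code a⁻¹) = true
    rw [← mul_one a⁻¹, key a _ ha, one]

theorem testBit_adjoin (g x : WhittenGroup 3) (m : ℕ) :
    (adjoin m (code g)).testBit (code x) = true ↔ m.testBit (code x) = true ∨
      m.testBit (code (g⁻¹ * x)) = true ∨ m.testBit (code (g⁻¹ * (g⁻¹ * x))) = true := by
  simp only [adjoin, Nat.testBit_or, testBit_mulMask, Bool.or_eq_true, or_assoc]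

theorem mulMask_le_adjoin (m i : ℕ) : mulMask i m ≤ adjoin m i := by
  rw [adjoin]
  exact Nat.right_le_or.trans Nat.left_le_or

/-- `L` lists the masks of the subgroups of `Γ_3` all of whose elements have code below `n`. -/
def Lists (n : ℕ) (L : List ℕ) : Prop :=
  ∀ m, m ∈ L ↔ m < 2 ^ n ∧ ∃ S, mask S = m

theorem Lists.extend {lo hi : ℕ} {L : List ℕ} (hL : Lists lo L) (hlh : lo ≤ hi) (h96 : hi ≤ 96)
    (hlo : ∃ A, mask A = 2 ^ lo - 1)
    (hadj : ∀ i ∈ List.range' lo (hi - lo), adjoin (2 ^ lo - 1) i = 2 ^ hi - 1) :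
    Lists hi (extend lo hi L) := by
  have h96' : 2 ^ hi ≤ 2 ^ 96 := Nat.pow_le_pow_right (by simp) h96
  intro m
  simp only [Whitten.extend, List.mem_append, List.mem_flatMap, List.mem_map, List.mem_filter,
    Bool.and_eq_true, decide_eq_true_eq, List.mem_range'_1, hL _]
  constructor
  · rintro (⟨hm, hS⟩ | ⟨k, ⟨hk, T, rfl⟩, i, ⟨hi', ⟨-, hlt⟩, hsub⟩, rfl⟩)
    · exact ⟨hm.trans_le (Nat.pow_le_pow_right (by simp) hlh), hS⟩
    · have hlt' := hlt.trans_le (Nat.pow_le_pow_right (by simp) (by omega : i + 1 ≤ hi))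
      refine ⟨hlt', exists_mask_eq hsub (fun h0 => ?_) (hlt'.trans_le h96')⟩
      rw [← code_elt i (by omega)] at h0
      have := (testBit_adjoin (elt i) 1 (mask T)).2 (.inl (testBit_mask.2 T.one_mem))
      simp [h0] at this
  · rintro ⟨hm, S, rfl⟩
    obtain ⟨A, hA⟩ := hlo
    have memA (x) : x ∈ A ↔ code x < lo := by
      rw [← testBit_mask, hA, Nat.testBit_two_pow_sub_one, decide_eq_true_eq]
    obtain ⟨g, hg, hmax⟩ := Set.exists_max_image (S : Set (WhittenGroup 3)) code
      (Set.toFinite _) ⟨1, S.one_mem⟩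
    have hgS : g ∈ S := hg
    rcases lt_or_ge (code g) lo with hglo | hglo
    · exact .inl ⟨mask_lt_two_pow_iff.2 fun x hx => (hmax x hx).trans_lt hglo, S, rfl⟩
    have hghi : code g < hi := mask_lt_two_pow_iff.1 hm g hg
    have hcos (x) (hx : x ∈ S) : x ∈ A ∨ g⁻¹ * x ∈ A ∨ g⁻¹ * (g⁻¹ * x) ∈ A := by
      simp only [← testBit_mask (S := A), hA]
      rw [← testBit_adjoin, hadj _ (List.mem_range'_1.2 ⟨hglo, by omega⟩),
        Nat.testBit_two_pow_sub_one, decide_eq_true_eq]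
      exact mask_lt_two_pow_iff.1 hm x hx
    have hadjS : adjoin (mask (S ⊓ A)) (code g) = mask S := by
      refine ((mask_eq_iff ?_).2 fun x => ?_).symm
      · have h1 := (moves_mulMask g).lt _ (mask_lt (S ⊓ A))
        exact Nat.or_lt_two_pow (Nat.or_lt_two_pow (mask_lt _) h1) ((moves_mulMask g).lt _ h1)
      · simp only [testBit_adjoin, testBit_mask, Subgroup.mem_inf,
          S.mul_mem_cancel_left (S.inv_mem hgS)]
        exact ⟨fun h => by tauto, fun h => by simpa [h] using hcos x h⟩
    have hlt : adjoin (mask (S ⊓ A)) (code g) < 2 ^ (code g + 1) := by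
      rw [hadjS]
      exact mask_lt_two_pow_iff.2 fun x hx => Nat.lt_succ_of_le (hmax x hx)
    have hsub : isSubgroupMask (adjoin (mask (S ⊓ A)) (code g)) = true := by
      rw [hadjS]
      exact isSubgroupMask_mask S
    exact .inr ⟨mask (S ⊓ A), ⟨mask_lt_two_pow_iff.2 fun x hx => (memA x).1 hx.2, _, rfl⟩,
      code g, ⟨⟨hglo, by omega⟩, ⟨(mulMask_le_adjoin _ _).trans_lt hlt, hlt⟩, hsub⟩, hadjS⟩

theorem lists_subgroupMasks : Lists 96 subgroupMasks := by
  have h1 : Lists 1 [1] := by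
    intro m
    rw [List.mem_singleton]
    constructor
    · rintro rfl
      exact ⟨by simp, exists_mask_eq (by decide +kernel) (by simp) (by simp)⟩
    · rintro ⟨hm, S, rfl⟩
      have := mask_ne_zero S
      omega
  have h2 := h1.extend (hi := 2) (by simp) (by simp)
    (exists_mask_eq (by decide +kernel) (by simp) (by simp)) (by decide +kernel)
  have h4 := h2.extend (hi := 4) (by simp) (by simp)
    (exists_mask_eq (by decide +kernel) (by simp) (by simp)) (by decide +kernel)
  have h8 := h4.extend (hi := 8) (by simp) (by simp)
    (exists_mask_eq (by decide +kernel) (by simp) (by simp)) (by decide +kernel)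
  have h16 := h8.extend (hi := 16) (by simp) (by simp)
    (exists_mask_eq (by decide +kernel) (by simp) (by simp)) (by decide +kernel)
  have h48 := h16.extend (hi := 48) (by simp) (by simp)
    (exists_mask_eq (by decide +kernel) (by simp) (by simp)) (by decide +kernel)
  exact h48.extend (by simp) (by simp)
    (exists_mask_eq (by decide +kernel) (by simp) (by simp)) (by decide +kernel)

/-- The number of elements of `{elt 0, elt 4, ..., elt 92}` normalizing the set with mask `m`. -/
def numFixing (m : ℕ) : ℕ :=
  (List.range 24).countP fun i => conjMask (4 * i) m == m

theorem subgroupMasks_counts : subgroupMasks.length = 420 ∧ subgroupMasks.Nodup ∧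
    (subgroupMasks.map numFixing).sum = 131 * 24 := by
  decide +kernel

theorem image_mask_univ [Fintype (Subgroup (WhittenGroup 3))] :
    Finset.univ.image mask = subgroupMasks.toFinset := by
  ext m
  rw [List.mem_toFinset, lists_subgroupMasks m]
  simp only [Finset.mem_image, Finset.mem_univ, true_and]
  exact ⟨fun ⟨S, h⟩ => ⟨h ▸ mask_lt S, S, h⟩, And.right⟩

theorem sum_mask [Fintype (Subgroup (WhittenGroup 3))] (f : ℕ → ℕ) :
    ∑ S, f (mask S) = (subgroupMasks.map f).sum := by
  rw [← List.sum_toFinset f subgroupMasks_counts.2.1, ← image_mask_univ,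
    Finset.sum_image mask_injective.injOn]

/-- The action of a group on its subgroups by conjugation. -/
abbrev conjAction (G : Type*) [Group G] : MulAction G (Subgroup G) where
  smul g H := H.map (MulAut.conj g).toMonoidHom
  one_smul H := by
    change H.map (MulAut.conj 1).toMonoidHom = H
    rw [map_one]
    exact H.map_id
  mul_smul g h H := by
    change H.map (MulAut.conj (g * h)).toMonoidHom =
      (H.map (MulAut.conj h).toMonoidHom).map (MulAut.conj g).toMonoidHom
    rw [map_mul, Subgroup.map_map]
    rfl

theorem mask_map_conj (g : WhittenGroup 3) (S : Subgroup (WhittenGroup 3)) :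
    mask (S.map (MulAut.conj g).toMonoidHom) = conjMask (code g) (mask S) := by
  refine (mask_eq_iff ((moves_conjMask g).lt _ (mask_lt S))).2 fun x => ?_
  obtain ⟨y, rfl⟩ := (MulAut.conj g).surjective x
  rw [(moves_conjMask g).testBit, testBit_mask]
  exact (Subgroup.mem_map_iff_mem (MulAut.conj g).injective).symm

theorem conjMask_add (q m : ℕ) {r : ℕ} (hr : r < 4) :
    conjMask (4 * q + r) m = conjMask (4 * q) m := by
  rw [conjMask, conjMask, show (4 * q + r) / 4 = 4 * q / 4 by omega,
    show (4 * q + r) / 8 = 4 * q / 8 by omega, show (4 * q + r) / 16 = 4 * q / 16 by omega,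
    show (4 * q + r) / 48 = 4 * q / 48 by omega]

theorem sum_conjMask (m : ℕ) :
    (∑ i ∈ Finset.range 96, if conjMask i m = m then 1 else 0) = 4 * numFixing m := by
  have h (n : ℕ) : (∑ i ∈ Finset.range (4 * n), if conjMask i m = m then 1 else 0) =
      4 * (List.range n).countP fun i => conjMask (4 * i) m == m := by
    induction n with
    | zero => simp
    | succ n ih =>
      simp only [Nat.mul_succ, Finset.sum_range_succ, ih, List.range_succ, List.countP_append,
        List.countP_singleton, beq_iff_eq, conjMask_add n m (r := 1) (by simp),
        conjMask_add n m (r := 2) (by simp), conjMask_add n m (r := 3) (by simp)]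
      ring
  exact h 24

theorem sum_code (f : ℕ → ℕ) : ∑ g, f (code g) = ∑ i ∈ Finset.range 96, f i :=
  Finset.sum_nbij' code elt (by simp [code_lt]) (by simp) (by simp [elt_code])
    (by simpa using code_elt) (by simp)

theorem card_subgroup : Nat.card (Subgroup (WhittenGroup 3)) = 420 := by
  have := Fintype.ofFinite (Subgroup (WhittenGroup 3))
  rw [Nat.card_eq_fintype_card, ← subgroupMasks_counts.1,
    ← List.toFinset_card_of_nodup subgroupMasks_counts.2.1, ← image_mask_univ,
    Finset.card_image_of_injective _ mask_injective, Finset.card_univ]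

theorem card_whittenGroup : Fintype.card (WhittenGroup 3) = 96 := by
  simpa using sum_code fun _ => 1

theorem card_quot_subgroupConj : Nat.card (Quot (subgroupConj (G := WhittenGroup 3))) = 131 := by
  classical
  have := Fintype.ofFinite (Subgroup (WhittenGroup 3))
  let := conjAction (WhittenGroup 3)
  have hquot : Nat.card (Quot (subgroupConj (G := WhittenGroup 3))) =
      Fintype.card (MulAction.orbitRel.Quotient (WhittenGroup 3) (Subgroup (WhittenGroup 3))) := by
    rw [← Nat.card_eq_fintype_card]
    refine Nat.card_congr (Quot.congrRight fun H K => ?_)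
    exact MulAction.mem_orbit_symm (a₁ := K) (a₂ := H)
  have hfix (g : WhittenGroup 3) :
      Fintype.card (MulAction.fixedBy (Subgroup (WhittenGroup 3)) g) =
        ∑ S, if conjMask (code g) (mask S) = mask S then 1 else 0 := by
    rw [← Finset.card_filter, Fintype.card_subtype]
    congr! 2 with S
    rw [← mask_map_conj, mask_injective.eq_iff]
    rfl
  have h := MulAction.sum_card_fixedBy_eq_card_orbits_mul_card_group (WhittenGroup 3)
    (Subgroup (WhittenGroup 3))
  simp only [hfix] at h
  rw [Finset.sum_comm, ← hquot, card_whittenGroup] at h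
  have hsum (m : ℕ) : (∑ g, if conjMask (code g) m = m then 1 else 0) = 4 * numFixing m :=
    (sum_code fun i => if conjMask i m = m then 1 else 0).trans (sum_conjMask m)
  simp only [hsum] at h
  rw [← Finset.mul_sum, sum_mask, subgroupMasks_counts.2.2] at h
  omega

end Whitten

/-- The Whitten group Γ_3 (a group of order 96) has exactly
420 subgroups, and these subgroups fall into exactly 131 conjugacy classes. -/
theorem whittenGroup_3_subgroup_counts :
    Nat.card (WhittenGroup 3) = 96 ∧
    Nat.card (Subgroup (WhittenGroup 3)) = 420 ∧
    Nat.card (Quot (subgroupConj (G := WhittenGroup 3))) = 131 :=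
  ⟨Nat.card_eq_fintype_card.trans Whitten.card_whittenGroup, Whitten.card_subgroup,
    Whitten.card_quot_subgroupConj⟩
end
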